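/- arXiv:2112.06762 — 3 statements merged into one kernel-verified Lean document; each statement's English description precedes it below -/
import Mathlib

section
/- GRPL embeds in RPL: for every set T of graded formulas and every graded formula ⟨q, φ⟩, T ⊢_GRPL ⟨q, φ⟩ if and only if the set { r̄→ψ : ⟨r, ψ⟩ ∈ T } proves the formula q̄→φ in RPL. -/
/-- The rationals in the unit interval: indices of the truth constants of RPL,
and grades of graded formulas of GRPL. -/
abbrev UQ := {q : ℚ // 0 ≤ q ∧ q ≤ 1}

instance : Zero UQ := ⟨⟨0, by norm_num⟩⟩
instance : One UQ := ⟨⟨1, by norm_num⟩⟩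

/-- Łukasiewicz negation on the rational unit interval: `¬q = 1 - q`. -/
def UQ.lneg (q : UQ) : UQ :=
  ⟨1 - q.1, by obtain ⟨h0, h1⟩ := q.2; constructor <;> linarith⟩

/-- Łukasiewicz implication on the rational unit interval: `q → r = min 1 (1 - q + r)`. -/
def UQ.limp (q r : UQ) : UQ :=
  ⟨min 1 (1 - q.1 + r.1), by
    obtain ⟨hq0, hq1⟩ := q.2; obtain ⟨hr0, hr1⟩ := r.2
    exact ⟨le_min (by norm_num) (by linarith), min_le_left _ _⟩⟩

/-- Łukasiewicz strong conjunction on the rational unit interval: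
`q ⊙ r = max 0 (q + r - 1)`. -/
def UQ.lmul (q r : UQ) : UQ :=
  ⟨max 0 (q.1 + r.1 - 1), by
    obtain ⟨hq0, hq1⟩ := q.2; obtain ⟨hr0, hr1⟩ := r.2
    exact ⟨le_max_left _ _, max_le (by norm_num) (by linarith)⟩⟩

/-- Formulas of the language of RPL: propositional variables, a truth constant `q̄` for
each rational `q ∈ [0,1]`, negation and implication. -/
inductive Fml : Type
  | var : ℕ → Fml
  | const : UQ → Fml
  | neg : Fml → Fml
  | imp : Fml → Fml → Fml

/-- Strong conjunction, defined: `α ⊙ β := ¬(α → ¬β)`. -/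
def Fml.odot (a b : Fml) : Fml := Fml.neg (a.imp b.neg)

/-- (Min-)conjunction, defined: `α ∧ β := α ⊙ (α → β)`. -/
def Fml.conj (a b : Fml) : Fml := a.odot (a.imp b)

/-- Equivalence `α ≡ β`, the conjunction of the two implications. -/
def Fml.eqv (a b : Fml) : Fml := (a.imp b).conj (b.imp a)

/-- Instances of the axiom schemata (A1)-(A4) of Łukasiewicz logic Ł. -/
inductive IsLukAxiom : Fml → Prop
  | a1 (φ ψ : Fml) : IsLukAxiom (φ.imp (ψ.imp φ))
  | a2 (φ ψ χ : Fml) : IsLukAxiom ((φ.imp ψ).imp ((ψ.imp χ).imp (φ.imp χ)))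
  | a3 (φ ψ : Fml) : IsLukAxiom (((φ.imp ψ).imp ψ).imp ((ψ.imp φ).imp φ))
  | a4 (φ ψ : Fml) : IsLukAxiom ((φ.neg.imp ψ.neg).imp (ψ.imp φ))

/-- Axioms of Rational Pavelka logic RPL: the axioms of Ł together with the
bookkeeping axioms (with `1̄ ≡ 1` and `0̄ ≡ 0` rendered as the provability of `1̄`
and of `¬0̄`, since the basic language `{¬, →}` has no primitive truth constants). -/
inductive IsRPLAxiom : Fml → Prop
  | luk {φ : Fml} : IsLukAxiom φ → IsRPLAxiom φ
  | book_imp (q r : UQ) :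
      IsRPLAxiom (((Fml.const q).imp (Fml.const r)).eqv (Fml.const (q.limp r)))
  | book_neg (q : UQ) : IsRPLAxiom ((Fml.const q).neg.eqv (Fml.const q.lneg))
  | book_one : IsRPLAxiom (Fml.const 1)
  | book_zero : IsRPLAxiom (Fml.const 0).neg

/-- `L` is a proof in RPL from the theory `T`: every member of the list is an axiom of RPL,
a member of `T`, or follows from two earlier members by modus ponens. -/
def IsRPLProofFrom (T : Set Fml) (L : List Fml) : Prop :=
  ∀ i : Fin L.length, IsRPLAxiom (L.get i) ∨ L.get i ∈ T ∨
    ∃ j k : Fin L.length, j < i ∧ k < i ∧ L.get k = (L.get j).imp (L.get i)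

/-- `T ⊢_RPL φ`: some proof in RPL from `T` has `φ` as its last element. -/
def RPLProv (T : Set Fml) (φ : Fml) : Prop :=
  ∃ L : List Fml, IsRPLProofFrom T L ∧ L.getLast? = some φ

/-- The fuzzy set of axioms of GRPL: (A) instances of the axioms of Ł in grade 1;
(B) each constant `q̄` in grade `q`; (C) the bookkeeping axioms in grade 1;
(D) all formulas in grade 0. -/
inductive IsGRPLAxiom : UQ → Fml → Prop
  | luk {φ : Fml} : IsLukAxiom φ → IsGRPLAxiom 1 φ
  | const (q : UQ) : IsGRPLAxiom q (Fml.const q)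
  | book_neg (q : UQ) : IsGRPLAxiom 1 ((Fml.const q).neg.eqv (Fml.const q.lneg))
  | book_imp (q r : UQ) :
      IsGRPLAxiom 1 (((Fml.const q).imp (Fml.const r)).eqv (Fml.const (q.limp r)))
  | zero (φ : Fml) : IsGRPLAxiom 0 φ

/-- `L` is a graded proof in GRPL from the set `T` of graded formulas: every member is a
graded axiom of GRPL, a member of `T`, or follows from earlier members by graded modus
ponens (from `⟨q,φ⟩` and `⟨r,φ→ψ⟩` derive `⟨q⊙r,ψ⟩`) or by lifting (from `⟨q,φ⟩` derive
`⟨r→q, r̄→φ⟩`). -/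
def IsGRPLProofFrom (T : Set (UQ × Fml)) (L : List (UQ × Fml)) : Prop :=
  ∀ i : Fin L.length, IsGRPLAxiom (L.get i).1 (L.get i).2 ∨ L.get i ∈ T ∨
    (∃ j k : Fin L.length, j < i ∧ k < i ∧
      (L.get k).2 = (L.get j).2.imp (L.get i).2 ∧
      (L.get i).1 = UQ.lmul (L.get j).1 (L.get k).1) ∨
    (∃ j : Fin L.length, ∃ r : UQ, j < i ∧
      L.get i = (UQ.limp r (L.get j).1, (Fml.const r).imp (L.get j).2))

/-- `T ⊢_GRPL ⟨q,φ⟩`: some graded proof in GRPL from `T` has `⟨q,φ⟩` as its last element. -/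
def GRPLProv (T : Set (UQ × Fml)) (p : UQ × Fml) : Prop :=
  ∃ L : List (UQ × Fml), IsGRPLProofFrom T L ∧ L.getLast? = some p

/-- The set of graded hypotheses `⟨Γ(ψ), ψ⟩` determined by a fuzzy theory `Γ`. -/
def FuzzyThy (Γ : Fml → UQ) : Set (UQ × Fml) := {p | p.1 = Γ p.2}

/-- An assignment into the standard MV-algebra `[0,1]_Ł` takes values in `[0,1]`. -/
def IsAssignment (v : ℕ → ℝ) : Prop := ∀ n, v n ∈ Set.Icc (0 : ℝ) 1

/-- Evaluation of a formula in the standard MV-algebra `[0,1]_Ł`, with each rational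
constant interpreted canonically. -/
noncomputable def eval (v : ℕ → ℝ) : Fml → ℝ
  | Fml.var n => v n
  | Fml.const q => (q.1 : ℝ)
  | Fml.neg φ => 1 - eval v φ
  | Fml.imp φ ψ => min 1 (1 - eval v φ + eval v ψ)

section GenericProofs

variable {α : Type}

/-- Generic notion of proof as a list, relative to a step operator. -/
def GenProof (R : Set α → α → Prop) (L : List α) : Prop :=
  ∀ (n : ℕ) x, L[n]? = some x → R {y | ∃ j : ℕ, j < n ∧ L[j]? = some y} x

theorem GenProof.append {R : Set α → α → Prop} (hR : ∀ S S' x, S ⊆ S' → R S x → R S' x)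
    {L M : List α} (hL : GenProof R L) (hM : GenProof R M) : GenProof R (L ++ M) := by
  intro n x hx
  by_cases hn : n < L.length
  · rw [List.getElem?_append_left hn] at hx
    refine hR _ _ _ ?_ (hL n x hx)
    rintro y ⟨j, hj, hy⟩
    exact ⟨j, hj, by rw [List.getElem?_append_left (by omega)]; exact hy⟩
  · rw [List.getElem?_append_right (by omega)] at hx
    refine hR _ _ _ ?_ (hM _ x hx)
    rintro y ⟨j, hj, hy⟩
    refine ⟨j + L.length, by omega, ?_⟩
    rw [List.getElem?_append_right (by omega)]
    simpa using hy

theorem GenProof.snoc {R : Set α → α → Prop} (hR : ∀ S S' x, S ⊆ S' → R S x → R S' x)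
    {L : List α} (hL : GenProof R L) {z : α} (hz : R {y | y ∈ L} z) :
    GenProof R (L ++ [z]) := by
  intro n x hx
  by_cases hn : n < L.length
  · rw [List.getElem?_append_left hn] at hx
    refine hR _ _ _ ?_ (hL n x hx)
    rintro y ⟨j, hj, hy⟩
    exact ⟨j, hj, by rw [List.getElem?_append_left (by omega)]; exact hy⟩
  · rw [List.getElem?_append_right (by omega)] at hx
    have h0 : n - L.length = 0 := by
      by_contra h
      rw [List.getElem?_eq_none (by simp; omega)] at hx
      cases hx
    rw [h0] at hx
    simp at hx
    subst hx
    refine hR _ _ _ ?_ hz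
    intro y hy
    obtain ⟨j, hj⟩ := List.mem_iff_getElem?.1 hy
    have hjl : j < L.length := by
      by_contra h
      rw [List.getElem?_eq_none (by omega)] at hj
      cases hj
    exact ⟨j, by omega, by rw [List.getElem?_append_left hjl]; exact hj⟩

theorem GenProof.sound {R : Set α → α → Prop} (hR : ∀ S S' x, S ⊆ S' → R S x → R S' x)
    {L : List α} (hL : GenProof R L) (P : α → Prop) (hP : ∀ x, R {y | P y} x → P x)
    {x : α} (hx : L.getLast? = some x) : P x := by
  have key : ∀ (n : ℕ) x, L[n]? = some x → P x := by
    intro n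
    induction n using Nat.strong_induction_on with
    | _ n ih =>
      intro x hx
      refine hP x (hR _ _ _ ?_ (hL n x hx))
      rintro y ⟨j, hj, hy⟩
      exact ih j hj y hy
  obtain ⟨n, hn⟩ := List.mem_iff_getElem?.1 (List.mem_of_getLast? hx)
  exact key n x hn

/-- Generic provability. -/
def GenProv (R : Set α → α → Prop) (x : α) : Prop :=
  ∃ L, GenProof R L ∧ L.getLast? = some x

theorem GenProv.of_nil {R : Set α → α → Prop} (hR : ∀ S S' x, S ⊆ S' → R S x → R S' x)
    {x : α} (h : R ∅ x) : GenProv R x := by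
  refine ⟨[] ++ [x], GenProof.snoc hR ?_ (hR _ _ _ (Set.empty_subset _) h), by simp⟩
  intro n x hx
  simp at hx

theorem GenProv.of_two {R : Set α → α → Prop} (hR : ∀ S S' x, S ⊆ S' → R S x → R S' x)
    {x y z : α} (hx : GenProv R x) (hy : GenProv R y) (h : R {x, y} z) : GenProv R z := by
  obtain ⟨L, hL, hLx⟩ := hx
  obtain ⟨M, hM, hMy⟩ := hy
  refine ⟨(L ++ M) ++ [z], GenProof.snoc hR (hL.append hR hM) (hR _ _ _ ?_ h), by simp⟩
  rintro w (rfl | rfl)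
  · exact List.mem_append_left _ (List.mem_of_getLast? hLx)
  · exact List.mem_append_right _ (List.mem_of_getLast? hMy)

end GenericProofs

/-- One step of an RPL proof. -/
def RPLStep (T : Set Fml) (S : Set Fml) (x : Fml) : Prop :=
  IsRPLAxiom x ∨ x ∈ T ∨ ∃ y, y ∈ S ∧ y.imp x ∈ S

theorem RPLStep.mono (T : Set Fml) :
    ∀ S S' x, S ⊆ S' → RPLStep T S x → RPLStep T S' x := by
  rintro S S' x h (h1 | h1 | ⟨y, h1, h2⟩)
  · exact Or.inl h1
  · exact Or.inr (Or.inl h1)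
  · exact Or.inr (Or.inr ⟨y, h h1, h h2⟩)

theorem isRPLProof_iff (T : Set Fml) (L : List Fml) :
    IsRPLProofFrom T L ↔ GenProof (RPLStep T) L := by
  constructor
  · intro h n x hx
    obtain ⟨hn, rfl⟩ := List.getElem?_eq_some_iff.1 hx
    rcases h ⟨n, hn⟩ with h1 | h1 | ⟨j, k, hj, hk, h1⟩
    · exact Or.inl h1
    · exact Or.inr (Or.inl h1)
    · refine Or.inr (Or.inr ⟨L.get j, ⟨j, hj, by simp⟩, ⟨k, hk, ?_⟩⟩)
      have : L[n] = L.get ⟨n, hn⟩ := rfl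
      rw [this, ← h1]
      simp
  · intro h i
    rcases h i (L.get i) (by simp) with h1 | h1 | ⟨y, ⟨j, hj, hy⟩, ⟨k, hk, hz⟩⟩
    · exact Or.inl h1
    · exact Or.inr (Or.inl h1)
    · obtain ⟨hj', rfl⟩ := List.getElem?_eq_some_iff.1 hy
      obtain ⟨hk', hz⟩ := List.getElem?_eq_some_iff.1 hz
      exact Or.inr (Or.inr ⟨⟨j, hj'⟩, ⟨k, hk'⟩, hj, hk, hz⟩)

theorem rplProv_iff (T : Set Fml) (x : Fml) : RPLProv T x ↔ GenProv (RPLStep T) x := by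
  simp only [RPLProv, GenProv, isRPLProof_iff]

/-- One step of a GRPL proof. -/
def GRPLStep (T : Set (UQ × Fml)) (S : Set (UQ × Fml)) (x : UQ × Fml) : Prop :=
  IsGRPLAxiom x.1 x.2 ∨ x ∈ T ∨
    (∃ y z, y ∈ S ∧ z ∈ S ∧ z.2 = y.2.imp x.2 ∧ x.1 = UQ.lmul y.1 z.1) ∨
    (∃ y, ∃ r : UQ, y ∈ S ∧ x = (UQ.limp r y.1, (Fml.const r).imp y.2))

theorem GRPLStep.mono (T : Set (UQ × Fml)) :
    ∀ S S' x, S ⊆ S' → GRPLStep T S x → GRPLStep T S' x := by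
  rintro S S' x h (h1 | h1 | ⟨y, z, h1, h2, h3⟩ | ⟨y, r, h1, h2⟩)
  · exact Or.inl h1
  · exact Or.inr (Or.inl h1)
  · exact Or.inr (Or.inr (Or.inl ⟨y, z, h h1, h h2, h3⟩))
  · exact Or.inr (Or.inr (Or.inr ⟨y, r, h h1, h2⟩))

theorem isGRPLProof_iff (T : Set (UQ × Fml)) (L : List (UQ × Fml)) :
    IsGRPLProofFrom T L ↔ GenProof (GRPLStep T) L := by
  constructor
  · intro h n x hx
    obtain ⟨hn, rfl⟩ := List.getElem?_eq_some_iff.1 hx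
    rcases h ⟨n, hn⟩ with h1 | h1 | ⟨j, k, hj, hk, h1⟩ | ⟨j, r, hj, h1⟩
    · exact Or.inl h1
    · exact Or.inr (Or.inl h1)
    · exact Or.inr (Or.inr (Or.inl ⟨L.get j, L.get k, ⟨j, hj, by simp⟩, ⟨k, hk, by simp⟩, h1⟩))
    · exact Or.inr (Or.inr (Or.inr ⟨L.get j, r, ⟨j, hj, by simp⟩, h1⟩))
  · intro h i
    rcases h i (L.get i) (by simp) with
      h1 | h1 | ⟨y, z, ⟨j, hj, hy⟩, ⟨k, hk, hz⟩, h1⟩ | ⟨y, r, ⟨j, hj, hy⟩, h1⟩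
    · exact Or.inl h1
    · exact Or.inr (Or.inl h1)
    · obtain ⟨hj', rfl⟩ := List.getElem?_eq_some_iff.1 hy
      obtain ⟨hk', rfl⟩ := List.getElem?_eq_some_iff.1 hz
      exact Or.inr (Or.inr (Or.inl ⟨⟨j, hj'⟩, ⟨k, hk'⟩, hj, hk, h1⟩))
    · obtain ⟨hj', rfl⟩ := List.getElem?_eq_some_iff.1 hy
      exact Or.inr (Or.inr (Or.inr ⟨⟨j, hj'⟩, r, hj, h1⟩))

theorem grplProv_iff (T : Set (UQ × Fml)) (x : UQ × Fml) :
    GRPLProv T x ↔ GenProv (GRPLStep T) x := by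
  simp only [GRPLProv, GenProv, isGRPLProof_iff]

/-- A set of formulas containing the Łukasiewicz axioms and closed under modus ponens. -/
structure LukClosed (P : Fml → Prop) : Prop where
  ax : ∀ {x}, IsLukAxiom x → P x
  mp : ∀ {x y}, P x → P (x.imp y) → P y

namespace LukClosed

variable {P : Fml → Prop} {a b c : Fml}

theorem wk (H : LukClosed P) (a : Fml) (h : P b) : P (a.imp b) := H.mp h (H.ax (.a1 _ _))

theorem tr (H : LukClosed P) (h : P (a.imp b)) (h' : P (b.imp c)) : P (a.imp c) :=
  H.mp h' (H.mp h (H.ax (.a2 _ _ _)))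

theorem app (H : LukClosed P) (a b : Fml) : P (a.imp ((a.imp b).imp b)) :=
  H.tr (H.ax (.a1 a (b.imp a))) (H.ax (.a3 b a))

theorem exch (H : LukClosed P) (h : P (a.imp (b.imp c))) : P (b.imp (a.imp c)) :=
  H.tr (H.app b c) (H.mp h (H.ax (.a2 _ _ _)))

theorem idd (H : LukClosed P) (a : Fml) : P (a.imp a) :=
  H.mp (H.ax (.a1 a a)) (H.exch (H.ax (.a1 a (a.imp (a.imp a)))))

theorem pre (H : LukClosed P) (a : Fml) (h : P (b.imp c)) : P ((a.imp b).imp (a.imp c)) :=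
  H.mp h (H.exch (H.ax (.a2 _ _ _)))

theorem suf (H : LukClosed P) (c : Fml) (h : P (a.imp b)) : P ((b.imp c).imp (a.imp c)) :=
  H.mp h (H.ax (.a2 _ _ _))

theorem efq (H : LukClosed P) (a b : Fml) : P (a.neg.imp (a.imp b)) :=
  H.tr (H.ax (.a1 a.neg b.neg)) (H.ax (.a4 b a))

theorem dne (H : LukClosed P) (a : Fml) : P (a.neg.neg.imp a) :=
  H.mp (H.idd a) (H.exch
    (H.tr (H.tr (H.ax (.a1 a.neg.neg (a.imp a).neg.neg)) (H.ax (.a4 _ _))) (H.ax (.a4 _ _))))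

theorem dni (H : LukClosed P) (a : Fml) : P (a.imp a.neg.neg) :=
  H.mp (H.dne a.neg) (H.ax (.a4 _ _))

theorem contra (H : LukClosed P) (a b : Fml) : P ((a.imp b).imp (b.neg.imp a.neg)) :=
  H.tr (H.tr (H.suf b (H.dne a)) (H.pre _ (H.dni b))) (H.ax (.a4 _ _))

theorem conj_left (H : LukClosed P) (a b : Fml) : P ((a.conj b).imp a) :=
  H.tr (H.mp (H.efq a (a.imp b).neg) (H.contra _ _)) (H.dne a)

theorem conj_right (H : LukClosed P) (a b : Fml) : P ((a.conj b).imp b) :=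
  H.tr (H.mp (H.exch (H.tr (H.app a b) (H.contra _ _))) (H.contra _ _)) (H.dne b)

theorem eqv_mp (H : LukClosed P) (h : P (a.eqv b)) : P (a.imp b) := H.mp h (H.conj_left _ _)

theorem eqv_mpr (H : LukClosed P) (h : P (a.eqv b)) : P (b.imp a) := H.mp h (H.conj_right _ _)

end LukClosed

theorem rpl_closed (T : Set Fml) : LukClosed (GenProv (RPLStep T)) where
  ax h := GenProv.of_nil (RPLStep.mono T) (Or.inl (.luk h))
  mp {x y} hx hy := GenProv.of_two (RPLStep.mono T) hx hy
    (Or.inr (Or.inr ⟨x, by simp, by simp⟩))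

theorem grpl_mp (T : Set (UQ × Fml)) {q r : UQ} {x y : Fml} (hx : GenProv (GRPLStep T) (q, x))
    (hy : GenProv (GRPLStep T) (r, x.imp y)) : GenProv (GRPLStep T) (q.lmul r, y) :=
  GenProv.of_two (GRPLStep.mono T) hx hy
    (Or.inr (Or.inr (Or.inl ⟨(q, x), (r, x.imp y), by simp, by simp, rfl, rfl⟩)))

theorem grpl_ax (T : Set (UQ × Fml)) {q : UQ} {x : Fml} (h : IsGRPLAxiom q x) :
    GenProv (GRPLStep T) (q, x) :=
  GenProv.of_nil (GRPLStep.mono T) (Or.inl h)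

theorem lmul_one' (q : UQ) : q.lmul 1 = q := by
  apply Subtype.ext
  show max 0 (q.1 + 1 - 1) = q.1
  rw [add_sub_cancel_right]
  exact max_eq_right q.2.1

theorem limp_self' (q : UQ) : q.limp q = 1 := by
  apply Subtype.ext
  show min 1 (1 - q.1 + q.1) = 1
  simp

theorem lneg_zero' : UQ.lneg 0 = 1 := by
  apply Subtype.ext
  show (1 : ℚ) - 0 = 1
  simp

theorem lneg_lmul (q r : UQ) : (q.lmul r).lneg = q.limp r.lneg := by
  apply Subtype.ext
  show 1 - max 0 (q.1 + r.1 - 1) = min 1 (1 - q.1 + (1 - r.1))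
  rcases le_total (q.1 + r.1 - 1) 0 with h | h
  · rw [max_eq_left h, min_eq_left (by linarith)]; ring
  · rw [max_eq_right h, min_eq_right (by linarith)]; ring

theorem grpl_closed (T : Set (UQ × Fml)) :
    LukClosed (fun x => GenProv (GRPLStep T) (1, x)) where
  ax h := grpl_ax T (.luk h)
  mp {x y} hx hy := by
    have := grpl_mp T hx hy
    rwa [lmul_one'] at this

/-- GRPL embeds in RPL: for every set `T` of graded formulas and every
graded formula `⟨q,φ⟩`, `T ⊢_GRPL ⟨q,φ⟩` iff `{ r̄→ψ : ⟨r,ψ⟩ ∈ T } ⊢_RPL q̄→φ`. -/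
theorem grpl_embeds_in_rpl (T : Set (UQ × Fml)) (q : UQ) (φ : Fml) :
    GRPLProv T (q, φ) ↔
      RPLProv ((fun p : UQ × Fml => (Fml.const p.1).imp p.2) '' T) ((Fml.const q).imp φ) := by
  rw [grplProv_iff, rplProv_iff]
  set T' := (fun p : UQ × Fml => (Fml.const p.1).imp p.2) '' T with hT'
  constructor
  · rintro ⟨L, hL, hlast⟩
    have H := rpl_closed T'
    have hax : ∀ {x}, IsRPLAxiom x → GenProv (RPLStep T') x := fun h =>
      GenProv.of_nil (RPLStep.mono T') (Or.inl h)
    refine hL.sound (GRPLStep.mono T)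
      (fun p => GenProv (RPLStep T') ((Fml.const p.1).imp p.2)) ?_ hlast
    rintro ⟨s, x⟩ (h | h | ⟨⟨q, y⟩, ⟨r, z⟩, hy, hz, h1, h2⟩ | ⟨⟨q, y⟩, r, hy, h1⟩)
    · change IsGRPLAxiom s x at h
      cases h with
      | luk h => exact H.wk _ (H.ax h)
      | const q => exact H.idd _
      | book_neg q => exact H.wk _ (hax (.book_neg q))
      | book_imp q r => exact H.wk _ (hax (.book_imp q r))
      | zero => exact H.mp (hax .book_zero) (H.efq _ _)
    · exact GenProv.of_nil (RPLStep.mono T') (Or.inr (Or.inl ⟨(s, x), h, rfl⟩))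
    · dsimp only at h1 h2
      subst h1 h2
      have hy' : GenProv (RPLStep T') ((Fml.const q).imp y) := hy
      have hz' : GenProv (RPLStep T') ((Fml.const r).imp (y.imp x)) := hz
      have h3 := H.exch (H.tr hz' (H.suf x hy'))
      have h4 := H.exch (H.tr h3 (H.contra _ _))
      have h5 := H.tr h4 (H.pre _ (H.eqv_mp (hax (.book_neg r))))
      have h6 := H.tr h5 (H.eqv_mp (hax (.book_imp q r.lneg)))
      rw [← lneg_lmul] at h6
      have h7 := H.tr h6 (H.eqv_mpr (hax (.book_neg (q.lmul r))))
      exact H.mp h7 (H.ax (.a4 _ _))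
    · obtain ⟨rfl, rfl⟩ := Prod.mk.inj h1
      have hy' : GenProv (RPLStep T') ((Fml.const q).imp y) := hy
      exact H.tr (H.eqv_mpr (hax (.book_imp r q))) (H.pre _ hy')
  · rintro ⟨L, hL, hlast⟩
    have H := grpl_closed T
    have key : GenProv (GRPLStep T) (1, (Fml.const q).imp φ) := by
      refine hL.sound (RPLStep.mono T') (fun x => GenProv (GRPLStep T) (1, x)) ?_ hlast
      rintro x (h | h | ⟨y, hy, hz⟩)
      · cases h with
        | luk h => exact H.ax h
        | book_imp q r => exact grpl_ax T (.book_imp q r)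
        | book_neg q => exact grpl_ax T (.book_neg q)
        | book_one => exact grpl_ax T (.const 1)
        | book_zero =>
          have h := H.eqv_mpr (grpl_ax T (.book_neg 0))
          rw [lneg_zero'] at h
          exact H.mp (grpl_ax T (.const 1)) h
      · obtain ⟨⟨r, ψ⟩, hp, rfl⟩ := h
        have h0 : GenProv (GRPLStep T) (r, ψ) :=
          GenProv.of_nil (GRPLStep.mono T) (Or.inr (Or.inl hp))
        refine GenProv.of_two (GRPLStep.mono T) h0 h0
          (Or.inr (Or.inr (Or.inr ⟨(r, ψ), r, by simp, ?_⟩)))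
        simp only [limp_self']
      · exact H.mp hy hz
    have := grpl_mp T (grpl_ax T (.const q)) key
    rwa [lmul_one'] at this
end

section
/- GRPL embeds in GRPL via grade-1 formulas: for every set T of graded formulas and every graded formula ⟨q, φ⟩, T ⊢_GRPL ⟨q, φ⟩ if and only if { ⟨1, r̄→ψ⟩ : ⟨r, ψ⟩ ∈ T } ⊢_GRPL ⟨1, q̄→φ⟩. Moreover, the proof whose existence is asserted on the right-hand side can be chosen so that every graded formula occurring in it has grade 1. -/
/-- Derivability in GRPL from `T` using only graded formulas satisfying `K`. -/
inductive Der (T : Set (UQ × Fml)) (K : UQ × Fml → Prop) : UQ × Fml → Prop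
  | ax {q φ} : IsGRPLAxiom q φ → K (q, φ) → Der T K (q, φ)
  | hyp {p} : p ∈ T → K p → Der T K p
  | mp {q r φ ψ} : Der T K (q, φ) → Der T K (r, φ.imp ψ) → K (UQ.lmul q r, ψ) →
      Der T K (UQ.lmul q r, ψ)
  | lift {q φ} (r : UQ) : Der T K (q, φ) → K (UQ.limp r q, (Fml.const r).imp φ) →
      Der T K (UQ.limp r q, (Fml.const r).imp φ)

/-- One justified step from a list of earlier graded formulas. -/
def StepFrom (T : Set (UQ × Fml)) (L : List (UQ × Fml)) (x : UQ × Fml) : Prop :=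
  IsGRPLAxiom x.1 x.2 ∨ x ∈ T ∨
    (∃ a ∈ L, ∃ b ∈ L, b.2 = a.2.imp x.2 ∧ x.1 = UQ.lmul a.1 b.1) ∨
    (∃ a ∈ L, ∃ r : UQ, x = (UQ.limp r a.1, (Fml.const r).imp a.2))

theorem StepFrom.mono {T : Set (UQ × Fml)} {L M : List (UQ × Fml)} {x : UQ × Fml}
    (h : StepFrom T L x) (hs : L ⊆ M) : StepFrom T M x := by
  rcases h with h | h | ⟨a, ha, b, hb, h⟩ | ⟨a, ha, h⟩
  · exact Or.inl h
  · exact Or.inr (Or.inl h)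
  · exact Or.inr (Or.inr (Or.inl ⟨a, hs ha, b, hs hb, h⟩))
  · exact Or.inr (Or.inr (Or.inr ⟨a, hs ha, h⟩))

theorem proof_iff (T : Set (UQ × Fml)) (L : List (UQ × Fml)) :
    IsGRPLProofFrom T L ↔ ∀ i (hi : i < L.length), StepFrom T (L.take i) L[i] := by
  have mem : ∀ (i : ℕ) (a : UQ × Fml), a ∈ L.take i ↔ ∃ j : Fin L.length, j.1 < i ∧ L.get j = a := by
    intro i a
    rw [List.mem_take_iff_getElem]
    constructor
    · rintro ⟨j, hj, h⟩
      exact ⟨⟨j, by omega⟩, by simp; omega, by simpa using h⟩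
    · rintro ⟨j, hj, h⟩
      exact ⟨j.1, by have := j.2; omega, by simpa using h⟩
  constructor
  · intro h i hi
    rcases h ⟨i, hi⟩ with h | h | ⟨j, k, hj, hk, h⟩ | ⟨j, r, hj, h⟩
    · exact Or.inl h
    · exact Or.inr (Or.inl h)
    · exact Or.inr (Or.inr (Or.inl ⟨_, (mem _ _).2 ⟨j, hj, rfl⟩, _, (mem _ _).2 ⟨k, hk, rfl⟩, h⟩))
    · exact Or.inr (Or.inr (Or.inr ⟨_, (mem _ _).2 ⟨j, hj, rfl⟩, r, h⟩))
  · intro h i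
    rcases h i.1 i.2 with h | h | ⟨a, ha, b, hb, h⟩ | ⟨a, ha, r, h⟩
    · exact Or.inl h
    · exact Or.inr (Or.inl h)
    · obtain ⟨j, hj, rfl⟩ := (mem _ _).1 ha
      obtain ⟨k, hk, rfl⟩ := (mem _ _).1 hb
      exact Or.inr (Or.inr (Or.inl ⟨j, k, hj, hk, h⟩))
    · obtain ⟨j, hj, rfl⟩ := (mem _ _).1 ha
      exact Or.inr (Or.inr (Or.inr ⟨j, r, hj, h⟩))

theorem proof_append {T : Set (UQ × Fml)} {L M : List (UQ × Fml)}
    (hL : IsGRPLProofFrom T L) (hM : IsGRPLProofFrom T M) : IsGRPLProofFrom T (L ++ M) := by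
  rw [proof_iff] at *
  intro i hi
  by_cases h : i < L.length
  · rw [List.getElem_append_left h]
    refine (hL i h).mono ?_
    rw [List.take_append]
    exact List.subset_append_left _ _
  · rw [List.length_append] at hi
    rw [List.getElem_append_right (by omega)]
    refine (hM (i - L.length) (by omega)).mono ?_
    rw [List.take_append]
    exact List.subset_append_right _ _

theorem proof_snoc {T : Set (UQ × Fml)} {L : List (UQ × Fml)} {x : UQ × Fml}
    (hL : IsGRPLProofFrom T L) (hx : StepFrom T L x) : IsGRPLProofFrom T (L ++ [x]) := by
  rw [proof_iff] at *
  intro i hi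
  by_cases h : i < L.length
  · rw [List.getElem_append_left h]
    refine (hL i h).mono ?_
    rw [List.take_append]
    exact List.subset_append_left _ _
  · simp only [List.length_append, List.length_singleton] at hi
    have : i = L.length := by omega
    subst this
    simpa using hx

theorem der_to_list {T : Set (UQ × Fml)} {K : UQ × Fml → Prop} {p : UQ × Fml} (h : Der T K p) :
    ∃ L, IsGRPLProofFrom T L ∧ L.getLast? = some p ∧ ∀ x ∈ L, K x := by
  have nil : IsGRPLProofFrom T [] := fun i => i.elim0
  induction h with
  | @ax q φ h k => exact ⟨_, proof_snoc (x := (q, φ)) nil (Or.inl h), by simp, by simpa using k⟩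
  | hyp h k => exact ⟨_, proof_snoc nil (Or.inr (Or.inl h)), by simp, by simpa using k⟩
  | @mp q r φ ψ h1 h2 k ih1 ih2 =>
    obtain ⟨L, hL, lL, kL⟩ := ih1
    obtain ⟨M, hM, lM, kM⟩ := ih2
    refine ⟨_, proof_snoc (x := (UQ.lmul q r, ψ)) (proof_append hL hM) (Or.inr (Or.inr (Or.inl
      ⟨_, List.mem_append_left _ (List.mem_of_getLast? lL),
       _, List.mem_append_right _ (List.mem_of_getLast? lM), rfl, rfl⟩))), by simp, ?_⟩
    intro x hx
    simp only [List.mem_append, List.mem_singleton] at hx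
    rcases hx with (hx | hx) | rfl
    exacts [kL x hx, kM x hx, k]
  | lift r h k ih =>
    obtain ⟨L, hL, lL, kL⟩ := ih
    refine ⟨_, proof_snoc hL (Or.inr (Or.inr (Or.inr
      ⟨_, List.mem_of_getLast? lL, r, rfl⟩))), by simp, ?_⟩
    intro x hx
    simp only [List.mem_append, List.mem_singleton] at hx
    rcases hx with hx | rfl
    exacts [kL x hx, k]

theorem list_to_der {T : Set (UQ × Fml)} {p : UQ × Fml} (h : GRPLProv T p) :
    Der T (fun _ => True) p := by
  obtain ⟨L, hL, hl⟩ := h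
  have key : ∀ n (i : Fin L.length), i.1 = n → Der T (fun _ => True) (L.get i) := by
    intro n
    induction n using Nat.strong_induction_on with
    | _ n ih =>
      rintro i rfl
      rcases hL i with h | h | ⟨j, k, hj, hk, h2, h1⟩ | ⟨j, r, hj, h⟩
      · exact Der.ax h trivial
      · exact Der.hyp h trivial
      · have dj := ih _ hj j rfl
        have dk := ih _ hk k rfl
        have e : L.get i = (UQ.lmul (L.get j).1 (L.get k).1, (L.get i).2) := Prod.ext h1 rfl
        rw [e]
        refine Der.mp (φ := (L.get j).2) dj ?_ trivial
        rw [← h2]; exact dk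
      · rw [h]
        exact Der.lift r (ih _ hj j rfl) trivial
  obtain ⟨i, hi⟩ := List.mem_iff_get.1 (List.mem_of_getLast? hl)
  rw [← hi]; exact key _ i rfl

theorem UQ.lmul_one_right (q : UQ) : UQ.lmul q 1 = q := by
  apply Subtype.ext
  have h1 : (1 : UQ).1 = 1 := rfl
  have := q.2
  simp only [UQ.lmul, h1]
  rw [max_eq_right] <;> linarith

theorem UQ.limp_self_eq (q : UQ) : UQ.limp q q = 1 := by
  apply Subtype.ext
  have h1 : (1 : UQ).1 = 1 := rfl
  simp [UQ.limp, h1]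

theorem UQ.lmul_eq_lneg (q r : UQ) : UQ.lmul q r = (q.limp r.lneg).lneg := by
  apply Subtype.ext
  simp only [UQ.lmul, UQ.lneg, UQ.limp]
  rcases le_total 1 (1 - q.1 + (1 - r.1)) with h | h
  · rw [min_eq_left h, max_eq_left] <;> linarith
  · rw [min_eq_right h, max_eq_right] <;> linarith

/-- Grade-one derivability. -/
abbrev One1 (T : Set (UQ × Fml)) (φ : Fml) : Prop := Der T (fun p => p.1 = 1) (1, φ)

section
variable {T : Set (UQ × Fml)} {a b c d : Fml}

theorem o_mp (h1 : One1 T a) (h2 : One1 T (a.imp b)) : One1 T b := by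
  have := Der.mp h1 h2 (UQ.lmul_one_right 1)
  rwa [UQ.lmul_one_right] at this

theorem o_luk (h : IsLukAxiom a) : One1 T a := Der.ax (.luk h) rfl
theorem o_a1 (a b : Fml) : One1 T (a.imp (b.imp a)) := o_luk (.a1 a b)

theorem o_tr (h1 : One1 T (a.imp b)) (h2 : One1 T (b.imp c)) : One1 T (a.imp c) :=
  o_mp h2 (o_mp h1 (o_luk (.a2 a b c)))

theorem o_assert (a b : Fml) : One1 T (a.imp ((a.imp b).imp b)) :=
  o_tr (o_a1 a (b.imp a)) (o_luk (.a3 b a))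

theorem o_C (a b c : Fml) : One1 T ((a.imp (b.imp c)).imp (b.imp (a.imp c))) :=
  o_tr (o_luk (.a2 a (b.imp c) c)) (o_mp (o_assert b c) (o_luk (.a2 _ _ _)))

theorem o_c (h : One1 T (a.imp (b.imp c))) : One1 T (b.imp (a.imp c)) := o_mp h (o_C _ _ _)

theorem o_id (a : Fml) : One1 T (a.imp a) := o_mp (o_a1 a a) (o_c (o_a1 a (a.imp (a.imp a))))

theorem o_B (a b c : Fml) : One1 T ((b.imp c).imp ((a.imp b).imp (a.imp c))) :=
  o_c (o_luk (.a2 _ _ _))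

theorem o_pre (a : Fml) (h : One1 T (b.imp c)) : One1 T ((a.imp b).imp (a.imp c)) :=
  o_mp h (o_B _ _ _)

theorem o_suf (c : Fml) (h : One1 T (a.imp b)) : One1 T ((b.imp c).imp (a.imp c)) :=
  o_mp h (o_luk (.a2 _ _ _))

theorem o_dne (a : Fml) : One1 T (a.neg.neg.imp a) :=
  o_mp (o_id a) (o_c (o_tr (o_a1 a.neg.neg (a.imp a).neg.neg)
    (o_tr (o_luk (.a4 _ _)) (o_luk (.a4 a (a.imp a))))))

theorem o_dni (a : Fml) : One1 T (a.imp a.neg.neg) :=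
  o_mp (o_dne a.neg) (o_luk (.a4 _ _))

theorem o_contra (a b : Fml) : One1 T ((a.imp b).imp (b.neg.imp a.neg)) :=
  o_tr (o_suf b (o_dne a)) (o_tr (o_pre _ (o_dni b)) (o_luk (.a4 _ _)))

theorem o_contraR (h : One1 T (a.imp b)) : One1 T (b.neg.imp a.neg) := o_mp h (o_contra _ _)

/-- From `¬a → b` infer `¬b → a`. -/
theorem o_flip (h : One1 T (a.neg.imp b)) : One1 T (b.neg.imp a) := o_tr (o_contraR h) (o_dne a)

theorem o_exf (a b : Fml) : One1 T (a.neg.imp (a.imp b)) :=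
  o_tr (o_a1 a.neg b.neg) (o_luk (.a4 _ _))

theorem o_conjL (h : One1 T (a.conj b)) : One1 T a :=
  o_mp h (o_flip (o_exf a _))

theorem o_conjR (h : One1 T (a.conj b)) : One1 T b :=
  o_mp h (o_flip (o_c (o_tr (o_assert a b) (o_contra _ _))))

theorem o_neg1 (q : UQ) : One1 T ((Fml.const q).neg.imp (Fml.const q.lneg)) :=
  o_conjL (Der.ax (.book_neg q) rfl)
theorem o_neg2 (q : UQ) : One1 T ((Fml.const q.lneg).imp (Fml.const q).neg) :=
  o_conjR (Der.ax (.book_neg q) rfl)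
theorem o_imp1 (q r : UQ) :
    One1 T (((Fml.const q).imp (Fml.const r)).imp (Fml.const (q.limp r))) :=
  o_conjL (Der.ax (.book_imp q r) rfl)
theorem o_imp2 (q r : UQ) :
    One1 T ((Fml.const (q.limp r)).imp ((Fml.const q).imp (Fml.const r))) :=
  o_conjR (Der.ax (.book_imp q r) rfl)

theorem o_zero (a : Fml) : One1 T ((Fml.const 0).imp a) := by
  have e : UQ.lneg 0 = 1 := by
    apply Subtype.ext
    show (1 : ℚ) - 0 = 1
    norm_num
  have h1 : One1 T (Fml.const (UQ.lneg 0)) := by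
    rw [e]; exact Der.ax (.const 1) rfl
  exact o_mp (o_mp h1 (o_neg2 0)) (o_exf _ _)

theorem o_gmp {q r : UQ} (h1 : One1 T ((Fml.const q).imp a))
    (h2 : One1 T ((Fml.const r).imp (a.imp b))) :
    One1 T ((Fml.const (UQ.lmul q r)).imp b) := by
  rw [UQ.lmul_eq_lneg]
  have h3 : One1 T ((Fml.const q).imp ((Fml.const r).imp b)) := o_c (o_tr h2 (o_suf b h1))
  have h4 : One1 T (b.neg.imp ((Fml.const q).imp (Fml.const r).neg)) :=
    o_c (o_tr h3 (o_contra _ _))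
  have h5 := o_tr (o_tr h4 (o_pre _ (o_neg1 r))) (o_imp1 q r.lneg)
  exact o_tr (o_neg2 _) (o_flip h5)

end

theorem forward {T : Set (UQ × Fml)} {p : UQ × Fml} (h : Der T (fun _ => True) p) :
    One1 ((fun p : UQ × Fml => ((1 : UQ), (Fml.const p.1).imp p.2)) '' T)
      ((Fml.const p.1).imp p.2) := by
  induction h with
  | ax h _ =>
    cases h with
    | luk h => exact o_mp (o_luk h) (o_a1 _ _)
    | const => exact o_id _
    | book_neg q => exact o_mp (Der.ax (.book_neg q) rfl) (o_a1 _ _)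
    | book_imp q r => exact o_mp (Der.ax (.book_imp q r) rfl) (o_a1 _ _)
    | zero => exact o_zero _
  | hyp h _ => exact Der.hyp ⟨_, h, rfl⟩ rfl
  | mp _ _ _ ih1 ih2 => exact o_gmp ih1 ih2
  | lift r _ _ ih => exact o_tr (o_imp2 _ _) (o_pre _ ih)

theorem backward {T : Set (UQ × Fml)} {p : UQ × Fml}
    (h : Der ((fun p : UQ × Fml => ((1 : UQ), (Fml.const p.1).imp p.2)) '' T)
      (fun _ => True) p) : Der T (fun _ => True) p := by
  induction h with
  | ax h _ => exact Der.ax h trivial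
  | hyp h _ =>
    obtain ⟨x, hx, rfl⟩ := h
    have := Der.lift (T := T) (K := fun _ => True) (q := x.1) (φ := x.2) x.1
      (Der.hyp hx trivial) trivial
    rwa [UQ.limp_self_eq] at this
  | mp _ _ _ ih1 ih2 => exact Der.mp ih1 ih2 trivial
  | lift r _ _ ih => exact Der.lift r ih trivial

/-- GRPL embeds in GRPL via grade-1 formulas: `T ⊢_GRPL ⟨q,φ⟩` iff
`{ ⟨1, r̄→ψ⟩ : ⟨r,ψ⟩ ∈ T } ⊢_GRPL ⟨1, q̄→φ⟩`; moreover the proof asserted on the right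
can be chosen so that every graded formula occurring in it has grade `1`. -/
theorem grpl_embeds_in_grpl (T : Set (UQ × Fml)) (q : UQ) (φ : Fml) :
    (GRPLProv T (q, φ) ↔
      GRPLProv ((fun p : UQ × Fml => ((1 : UQ), (Fml.const p.1).imp p.2)) '' T)
        (1, (Fml.const q).imp φ)) ∧
    (GRPLProv T (q, φ) →
      ∃ P : List (UQ × Fml),
        IsGRPLProofFrom ((fun p : UQ × Fml => ((1 : UQ), (Fml.const p.1).imp p.2)) '' T) P ∧
        P.getLast? = some (1, (Fml.const q).imp φ) ∧ ∀ p ∈ P, p.1 = (1 : UQ)) := by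
  have fw := fun h : GRPLProv T (q, φ) => der_to_list (forward (list_to_der h))
  refine ⟨⟨fun h => ?_, fun h => ?_⟩, fun h => fw h⟩
  · obtain ⟨P, h1, h2, _⟩ := fw h
    exact ⟨P, h1, h2⟩
  · have h1 := backward (list_to_der h)
    have h2 := Der.mp (Der.ax (IsGRPLAxiom.const q) trivial) h1 trivial
    rw [UQ.lmul_one_right] at h2
    obtain ⟨L, a, b, _⟩ := der_to_list h2
    exact ⟨L, a, b⟩
end

section
/- Finite strong standard completeness for Ł: if Γ is a finite set of formulas and φ a formula of the language of Ł, then Γ ⊢_Ł φ if and only if every assignment into the standard MV-algebra [0,1]_Ł that gives value 1 to all formulas of Γ gives value 1 to φ. -/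
/-- Formulas of propositional Łukasiewicz logic Ł: propositional variables,
negation and implication. -/
inductive LFml : Type
  | var : ℕ → LFml
  | neg : LFml → LFml
  | imp : LFml → LFml → LFml

/-- Provability in Łukasiewicz logic Ł: axiom schemata (A1)-(A4), hypotheses, and
modus ponens as the only rule. -/
inductive LukProv (T : Set LFml) : LFml → Prop
  | a1 (φ ψ : LFml) : LukProv T (φ.imp (ψ.imp φ))
  | a2 (φ ψ χ : LFml) : LukProv T ((φ.imp ψ).imp ((ψ.imp χ).imp (φ.imp χ)))
  | a3 (φ ψ : LFml) : LukProv T (((φ.imp ψ).imp ψ).imp ((ψ.imp φ).imp φ))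
  | a4 (φ ψ : LFml) : LukProv T ((φ.neg.imp ψ.neg).imp (ψ.imp φ))
  | hyp {φ : LFml} : φ ∈ T → LukProv T φ
  | mp {φ ψ : LFml} : LukProv T φ → LukProv T (φ.imp ψ) → LukProv T ψ

/-- Evaluation in the standard MV-algebra `[0,1]_Ł`:
`x →_Ł y = min(1, 1−x+y)` and `¬_Ł x = 1−x`. -/
noncomputable def leval (v : ℕ → ℝ) : LFml → ℝ
  | LFml.var n => v n
  | LFml.neg φ => 1 - leval v φ
  | LFml.imp φ ψ => min 1 (1 - leval v φ + leval v ψ)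

namespace LukProv

variable {T : Set LFml}

theorem syl {a b c : LFml} (h1 : LukProv T (a.imp b)) (h2 : LukProv T (b.imp c)) :
    LukProv T (a.imp c) := mp h2 (mp h1 (a2 a b c))

theorem assertion (a b : LFml) : LukProv T (a.imp ((a.imp b).imp b)) :=
  syl (a1 a (b.imp a)) (a3 b a)

theorem exch (a b c : LFml) : LukProv T ((a.imp (b.imp c)).imp (b.imp (a.imp c))) :=
  syl (a2 a (b.imp c) c) (mp (assertion b c) (a2 b ((b.imp c).imp c) (a.imp c)))

theorem ident (a : LFml) : LukProv T (a.imp a) :=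
  mp (a1 a a) (mp (a1 a (a.imp (a.imp a))) (exch a (a.imp (a.imp a)) a))

theorem dne (a : LFml) : LukProv T (a.neg.neg.imp a) := by
  let θ := a.imp a
  have hθ : LukProv T θ := ident a
  have h1 : LukProv T (a.neg.neg.imp (θ.imp a)) :=
    syl (syl (a1 a.neg.neg θ.neg.neg) (a4 _ _)) (a4 _ _)
  exact mp hθ (mp h1 (exch _ _ _))

theorem dni (a : LFml) : LukProv T (a.imp a.neg.neg) := mp (dne a.neg) (a4 _ _)

theorem suffix {a b : LFml} (c : LFml) (h : LukProv T (a.imp b)) :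
    LukProv T ((b.imp c).imp (a.imp c)) := mp h (a2 _ _ _)

theorem a2' (a b c : LFml) : LukProv T ((b.imp c).imp ((a.imp b).imp (a.imp c))) :=
  mp (a2 a b c) (exch _ _ _)

theorem preffix {b c : LFml} (a : LFml) (h : LukProv T (b.imp c)) :
    LukProv T ((a.imp b).imp (a.imp c)) := mp h (a2' _ _ _)

theorem contra (a b : LFml) : LukProv T ((a.imp b).imp (b.neg.imp a.neg)) :=
  syl (syl (suffix b (dne a)) (preffix _ (dni b))) (a4 _ _)

theorem mono {S : Set LFml} (hST : S ⊆ T) {a : LFml} (h : LukProv S a) : LukProv T a := by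
  induction h with
  | a1 => exact a1 _ _
  | a2 => exact a2 _ _ _
  | a3 => exact a3 _ _
  | a4 => exact a4 _ _
  | hyp h => exact hyp (hST h)
  | mp _ _ i j => exact mp i j

theorem cut {S : Set LFml} (hST : ∀ b ∈ S, LukProv T b) {a : LFml} (h : LukProv S a) :
    LukProv T a := by
  induction h with
  | a1 => exact a1 _ _
  | a2 => exact a2 _ _ _
  | a3 => exact a3 _ _
  | a4 => exact a4 _ _
  | hyp h => exact hST _ h
  | mp _ _ i j => exact mp i j

theorem sound {a : LFml} (h : LukProv T a) (v : ℕ → ℝ) (hv : ∀ n, v n ∈ Set.Icc (0 : ℝ) 1)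
    (hT : ∀ b ∈ T, leval v b = 1) : leval v a = 1 := by
  have key : ∀ b, 0 ≤ leval v b ∧ leval v b ≤ 1 := by
    intro b
    induction b with
    | var n => exact ⟨(hv n).1, (hv n).2⟩
    | neg b ih => simp only [leval]; constructor <;> linarith
    | imp b c ihb ihc =>
      simp only [leval]
      exact ⟨le_min (by norm_num) (by linarith), min_le_left _ _⟩
  induction h with
  | a1 b c =>
    have := key b; have := key c
    simp only [leval]; grind
  | a2 b c d =>
    have := key b; have := key c; have := key d
    simp only [leval]; grind
  | a3 b c =>
    have := key b; have := key c
    simp only [leval]; grind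
  | a4 b c =>
    have := key b; have := key c
    simp only [leval]; grind
  | hyp h => exact hT _ h
  | @mp b c _ _ i j =>
    have := key b; have := key c
    simp only [leval] at j; grind

/-- Provability from the union of a nonempty chain of theories. -/
theorem of_sUnion {C : Set (Set LFml)} (hC : IsChain (· ⊆ ·) C) (hne : C.Nonempty) {a : LFml}
    (h : LukProv (⋃₀ C) a) : ∃ S ∈ C, LukProv S a := by
  obtain ⟨S0, hS0⟩ := hne
  induction h with
  | a1 => exact ⟨S0, hS0, a1 _ _⟩
  | a2 => exact ⟨S0, hS0, a2 _ _ _⟩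
  | a3 => exact ⟨S0, hS0, a3 _ _⟩
  | a4 => exact ⟨S0, hS0, a4 _ _⟩
  | hyp h => obtain ⟨S, hS, h⟩ := h; exact ⟨S, hS, hyp h⟩
  | mp _ _ i j =>
    obtain ⟨S, hS, i⟩ := i
    obtain ⟨S', hS', j⟩ := j
    rcases hC.total hS hS' with h | h
    · exact ⟨S', hS', mp (mono h i) j⟩
    · exact ⟨S, hS, mp i (mono h j)⟩

end LukProv

/-- Wajsberg algebras. -/
class WAlg (A : Type) where
  imp : A → A → A
  neg : A → A
  one : A
  one_imp : ∀ x, imp one x = x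
  imp_self : ∀ x, imp x x = one
  imp_one : ∀ x, imp x one = one
  exch : ∀ x y z, imp x (imp y z) = imp y (imp x z)
  antisymm : ∀ x y, imp x y = one → imp y x = one → x = y
  trans : ∀ x y z, imp (imp x y) (imp (imp y z) (imp x z)) = one
  comm : ∀ x y, imp (imp x y) y = imp (imp y x) x
  neg_neg : ∀ x, neg (neg x) = x
  contra : ∀ x y, imp (neg x) (neg y) = imp y x

/-- The Lindenbaum congruence. -/
def lindSetoid (T : Set LFml) : Setoid LFml where
  r a b := LukProv T (a.imp b) ∧ LukProv T (b.imp a)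
  iseqv := ⟨fun a => ⟨.ident a, .ident a⟩, fun h => ⟨h.2, h.1⟩,
    fun h k => ⟨h.1.syl k.1, k.2.syl h.2⟩⟩

/-- The Lindenbaum algebra. -/
def Lind (T : Set LFml) : Type := Quotient (lindSetoid T)

namespace Lind
variable {T : Set LFml}

/-- The class of a formula. -/
def mk (T : Set LFml) (a : LFml) : Lind T := Quotient.mk (lindSetoid T) a

theorem mk_eq {a b : LFml} :
    mk T a = mk T b ↔ LukProv T (a.imp b) ∧ LukProv T (b.imp a) :=
  ⟨fun h => Quotient.exact h, fun h => Quotient.sound h⟩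

/-- A theorem. -/
def top : LFml := (LFml.var 0).imp (LFml.var 0)

theorem mk_eq_top {a : LFml} : mk T a = mk T top ↔ LukProv T a := by
  rw [mk_eq]
  exact ⟨fun h => .mp (.ident _) h.2, fun h => ⟨.mp (.ident _) (.a1 _ _), .mp h (.a1 _ _)⟩⟩

instance : WAlg (Lind T) where
  imp := Quotient.map₂ LFml.imp (by
    rintro a a' ⟨h1, h2⟩ b b' ⟨k1, k2⟩
    exact ⟨(LukProv.suffix b h2).syl (LukProv.preffix a' k1),
      (LukProv.suffix b' h1).syl (LukProv.preffix a k2)⟩)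
  neg := Quotient.map LFml.neg (by
    rintro a a' ⟨h1, h2⟩
    exact ⟨.mp h2 (.contra _ _), .mp h1 (.contra _ _)⟩)
  one := mk T top
  one_imp := by
    rintro ⟨x⟩
    exact mk_eq.2 ⟨.mp (.ident _) (.assertion _ _), .a1 _ _⟩
  imp_self := by
    rintro ⟨x⟩
    exact mk_eq_top.2 (.ident _)
  imp_one := by
    rintro ⟨x⟩
    exact mk_eq_top.2 (.mp (.ident _) (.a1 _ _))
  exch := by
    rintro ⟨x⟩ ⟨y⟩ ⟨z⟩
    exact mk_eq.2 ⟨.exch _ _ _, .exch _ _ _⟩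
  antisymm := by
    rintro ⟨x⟩ ⟨y⟩ h k
    exact mk_eq.2 ⟨mk_eq_top.1 h, mk_eq_top.1 k⟩
  trans := by
    rintro ⟨x⟩ ⟨y⟩ ⟨z⟩
    exact mk_eq_top.2 (.a2 _ _ _)
  comm := by
    rintro ⟨x⟩ ⟨y⟩
    exact mk_eq.2 ⟨.a3 _ _, .a3 _ _⟩
  neg_neg := by
    rintro ⟨x⟩
    exact mk_eq.2 ⟨.dne _, .dni _⟩
  contra := by
    rintro ⟨x⟩ ⟨y⟩
    exact mk_eq.2 ⟨.a4 _ _, .contra _ _⟩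

theorem mk_eq_one {a : LFml} : mk T a = WAlg.one ↔ LukProv T a := mk_eq_top
theorem mk_imp (a b : LFml) : mk T (a.imp b) = WAlg.imp (mk T a) (mk T b) := rfl
theorem mk_neg (a : LFml) : mk T a.neg = WAlg.neg (mk T a) := rfl

end Lind

namespace WAlg
variable {A : Type} [WAlg A]

theorem le_trans' {x y z : A} (h : imp x y = one) (k : imp y z = one) : imp x z = one := by
  have := trans x y z
  rwa [h, k, one_imp, one_imp] at this

theorem le_imp_imp (x y : A) : imp x (imp (imp x y) y) = one := by
  rw [exch, imp_self]

theorem le_imp (x y : A) : imp x (imp y x) = one := by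
  rw [exch, imp_self, imp_one]

theorem imp_anti {x y : A} (z : A) (h : imp x y = one) : imp (imp y z) (imp x z) = one := by
  have := trans x y z
  rwa [h, one_imp] at this

theorem imp_mono {y z : A} (x : A) (h : imp y z = one) : imp (imp x y) (imp x z) = one := by
  have := trans x y z
  rwa [h, one_imp] at this

theorem triple (x y : A) : imp (imp (imp x y) y) y = imp x y :=
  antisymm _ _ (imp_anti _ (le_imp_imp _ _)) (le_imp_imp _ _)

theorem join_mp {d e c : A} (h1 : imp (imp d c) c = one) (h2 : imp (imp (imp d e) c) c = one) :
    imp (imp e c) c = one := by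
  have e1 : imp d c = c := antisymm _ _ h1 (le_imp _ _)
  have h3 : imp (imp e c) (imp (imp d e) (imp d c)) = one := by rw [exch]; exact trans _ _ _
  rw [e1] at h3
  exact le_trans' h3 h2

theorem prelin (a b : A) : imp (imp (imp a b) (imp b a)) (imp b a) = one := by
  have h : imp (imp a b) (imp b a) = imp b a := by
    let u := imp (imp a b) b
    have h1 : imp u b = imp a b := triple a b
    have h2 : imp u a = imp b a := by
      show imp (imp (imp a b) b) a = _
      rw [comm]; exact triple b a
    have hbu : imp b u = one := le_imp _ _
    rw [← h1, ← h2, ← contra b u, ← contra a u, exch, comm, contra, hbu, one_imp, contra, contra,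
      h2]
  rw [h, imp_self]

end WAlg

open WAlg in
theorem LukProv.join {T : Set LFml} {a b c : LFml} (h : LukProv (insert a T) b) :
    LukProv (insert ((a.imp c).imp c) T) ((b.imp c).imp c) := by
  induction h with
  | a1 => exact mp (a1 _ _) (assertion _ _)
  | a2 => exact mp (a2 _ _ _) (assertion _ _)
  | a3 => exact mp (a3 _ _) (assertion _ _)
  | a4 => exact mp (a4 _ _) (assertion _ _)
  | hyp h =>
    rcases h with rfl | h
    · exact hyp (Or.inl rfl)
    · exact mp (hyp (Or.inr h)) (assertion _ _)
  | mp _ _ i j =>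
    rw [← Lind.mk_eq_one] at i j ⊢
    simp only [Lind.mk_imp] at i j ⊢
    exact WAlg.join_mp i j

/-- Extension to a linear theory. -/
theorem LukProv.exists_linear {Γ : Set LFml} {f : LFml} (h : ¬ LukProv Γ f) :
    ∃ T, Γ ⊆ T ∧ ¬ LukProv T f ∧ ∀ a b : LFml, LukProv T (a.imp b) ∨ LukProv T (b.imp a) := by
  obtain ⟨T, hΓ, hT⟩ := zorn_subset_nonempty {T | ¬ LukProv T f} (by
    intro C hC hch hne
    refine ⟨⋃₀ C, ?_, fun s hs => Set.subset_sUnion_of_mem hs⟩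
    intro hp
    obtain ⟨S, hS, hp⟩ := LukProv.of_sUnion hch hne hp
    exact hC hS hp) Γ h
  refine ⟨T, hΓ, hT.1, fun a b => ?_⟩
  have key : ∀ c, LukProv T c ∨ LukProv (insert c T) f := by
    intro c
    by_contra! hc
    have := hT.2 hc.2 (Set.subset_insert c T)
    exact hc.1 (.hyp (this (Set.mem_insert c T)))
  rcases key (a.imp b) with h1 | h1
  · exact Or.inl h1
  rcases key (b.imp a) with h2 | h2
  · exact Or.inr h2
  exfalso
  apply hT.1
  have h3 := LukProv.join (c := b.imp a) h1
  have h4 : LukProv T ((f.imp (b.imp a)).imp (b.imp a)) := by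
    refine LukProv.cut ?_ h3
    rintro x (rfl | hx)
    · rw [← Lind.mk_eq_one]
      simp only [Lind.mk_imp]
      exact WAlg.prelin _ _
    · exact .hyp hx
  have h5 := LukProv.join (c := f) h2
  have h6 : LukProv T ((f.imp f).imp f) := by
    refine LukProv.cut ?_ h5
    rintro x (rfl | hx)
    · exact .mp h4 (.a3 _ _)
    · exact .hyp hx
  exact .mp (.ident f) h6

namespace WAlg
variable {A : Type} [WAlg A]

/-- Strong disjunction. -/
def ad (x y : A) : A := imp (neg x) y
/-- Strong conjunction. -/
def ml (x y : A) : A := neg (imp x (neg y))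
/-- Falsum. -/
def zero : A := neg one

theorem contra' (x y : A) : imp x (neg y) = imp y (neg x) := by
  rw [← contra (neg y) x, neg_neg]

theorem contra'' (x y : A) : imp (neg x) y = imp (neg y) x := by
  rw [← contra x (neg y), neg_neg]

theorem ad_comm (x y : A) : ad x y = ad y x := contra'' x y

theorem ad_assoc (x y z : A) : ad (ad x y) z = ad x (ad y z) := by
  rw [ad_comm (ad x y) z, ad_comm y z]
  exact exch _ _ _

theorem neg_one' : neg (one : A) = zero := rfl
theorem neg_zero' : neg (zero : A) = one := neg_neg _

theorem zero_ad (x : A) : ad zero x = x := by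
  unfold ad; rw [neg_zero', one_imp]

theorem imp_zero (x : A) : imp x zero = neg x := by
  unfold zero; rw [contra', one_imp]

theorem zero_imp (x : A) : imp zero x = one := by
  rw [← neg_neg x, contra', neg_zero', imp_one]

theorem neg_ad (x y : A) : neg (ad x y) = ml (neg x) (neg y) := by
  unfold ad ml; rw [neg_neg]

theorem neg_ml (x y : A) : neg (ml x y) = ad (neg x) (neg y) := by
  unfold ad ml; rw [neg_neg, neg_neg]

theorem neg_inj {x y : A} (h : neg x = neg y) : x = y := by
  rw [← neg_neg x, h, neg_neg]

theorem ml_comm (x y : A) : ml x y = ml y x := by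
  unfold ml; rw [contra']

theorem ml_assoc (x y z : A) : ml (ml x y) z = ml x (ml y z) := by
  apply neg_inj
  simp only [neg_ml, ad_assoc]

theorem eq_one_of_one_le {x : A} (h : imp one x = one) : x = one := by rwa [one_imp] at h

theorem ml_le_left (x y : A) : imp (ml x y) x = one := by
  unfold ml; rw [contra'', exch, contra, le_imp]

theorem ml_le_right (x y : A) : imp (ml x y) y = one := by
  rw [ml_comm]; exact ml_le_left _ _

theorem le_ad_right (x y : A) : imp y (ad x y) = one := le_imp _ _

theorem ad_mono {x y : A} (z : A) (h : imp x y = one) : imp (ad x z) (ad y z) = one := by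
  rw [ad_comm x, ad_comm y]; exact imp_mono _ h

theorem ml_mono {x y : A} (z : A) (h : imp x y = one) : imp (ml x z) (ml y z) = one := by
  unfold ml; rw [contra]; exact imp_anti _ h

theorem case2 {a b c : A} (h1 : imp a (neg b) = one) (h2 : imp b (neg c) = one) :
    ml (ad a b) c = ml a (ad b c) := by
  apply neg_inj
  unfold ml
  rw [neg_neg, neg_neg, ad_comm b c]
  unfold ad
  have e : imp (imp (neg c) b) b = neg c := by rw [comm, h2, one_imp]
  have h1' : imp b (neg a) = one := by rw [contra', h1]
  conv_lhs => rw [← e, exch, comm (neg a), h1', one_imp]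
  rw [contra']

theorem case3 {a b c : A} (h1 : imp a (neg b) = one) (h2 : ad b c = one) :
    ad a (ml b c) = ml (ad a b) c := by
  have h2' : imp (neg b) c = one := h2
  have h3 : imp (neg c) b = one := by rw [contra'', h2']
  have h1' : imp b (neg a) = one := by rw [contra', h1]
  let s := ad a (ml b c)
  have e1 : imp c (ml b c) = b := by
    unfold ml; rw [contra', comm, h3, one_imp]
  have e2 : ad a b = imp c s := by
    show _ = imp c (imp (neg a) (ml b c))
    rw [exch, e1]; rfl
  have e3 : imp s c = one := by
    have e4 : imp s (imp b (ml b c)) = one := imp_anti _ h1'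
    have e5 : imp b (ml b c) = c := by
      unfold ml; rw [contra' b (imp b (neg c)), contra' b c, comm, h2', one_imp]
    rwa [e5] at e4
  show s = _
  apply neg_inj
  rw [e2]
  unfold ml
  rw [neg_neg, ← contra s c, comm, contra, e3, one_imp]

theorem case5 {a b c : A} (h1 : ad a b = one) (h2 : ad b c = one) :
    ad (ml a b) c = ad a (ml b c) := by
  apply neg_inj
  simp only [neg_ad, neg_ml]
  apply case2
  · rw [neg_neg]; exact h1
  · rw [neg_neg]; exact h2

end WAlg

/-- Nontrivial Wajsberg chains. -/
class WChain (A : Type) extends WAlg A where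
  total : ∀ x y : A, imp x y = one ∨ imp y x = one
  nontriv : neg one ≠ one

/-- The Chang group of a chain. -/
@[ext] structure ChG (A : Type) [WChain A] where
  n : ℤ
  x : A
  hx : x ≠ WAlg.one

namespace ChG
open WAlg
variable {A : Type} [WChain A]

theorem le_neg_of_ne {a b : A} (h : ad a b ≠ one) : imp a (neg b) = one := by
  rcases WChain.total a (neg b) with k | k
  · exact k
  · exfalso; apply h; rw [ad_comm]; exact k

open Classical in
noncomputable instance : Add (ChG A) :=
  ⟨fun p q => if h : ad p.x q.x = one then
      ⟨p.n + q.n + 1, ml p.x q.x, fun k => q.hx (eq_one_of_one_le (by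
        have := ml_le_right p.x q.x
        rwa [k] at this))⟩
    else ⟨p.n + q.n, ad p.x q.x, h⟩⟩

instance : Zero (ChG A) := ⟨⟨0, zero, WChain.nontriv⟩⟩

open Classical in
noncomputable instance : Neg (ChG A) :=
  ⟨fun p => if h : p.x = zero then ⟨-p.n, zero, WChain.nontriv⟩ else
    ⟨-p.n - 1, neg p.x, fun k => h (by rw [← WAlg.neg_neg p.x, k]; rfl)⟩⟩

theorem zero_n : (0 : ChG A).n = 0 := rfl
theorem zero_x : (0 : ChG A).x = zero := rfl

open Classical in
theorem add_n_one {p q : ChG A} (h : ad p.x q.x = one) : (p + q).n = p.n + q.n + 1 := by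
  show (dite _ _ _ : ChG A).n = _
  rw [dif_pos h]
open Classical in
theorem add_x_one {p q : ChG A} (h : ad p.x q.x = one) : (p + q).x = ml p.x q.x := by
  show (dite _ _ _ : ChG A).x = _
  rw [dif_pos h]
open Classical in
theorem add_n_ne {p q : ChG A} (h : ad p.x q.x ≠ one) : (p + q).n = p.n + q.n := by
  show (dite _ _ _ : ChG A).n = _
  rw [dif_neg h]
open Classical in
theorem add_x_ne {p q : ChG A} (h : ad p.x q.x ≠ one) : (p + q).x = ad p.x q.x := by
  show (dite _ _ _ : ChG A).x = _
  rw [dif_neg h]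

theorem add_comm' (p q : ChG A) : p + q = q + p := by
  by_cases h : ad p.x q.x = one
  · have h' : ad q.x p.x = one := by rw [ad_comm, h]
    apply ChG.ext
    · rw [add_n_one h, add_n_one h']; ring
    · rw [add_x_one h, add_x_one h', ml_comm]
  · have h' : ad q.x p.x ≠ one := by rwa [ad_comm]
    apply ChG.ext
    · rw [add_n_ne h, add_n_ne h']; ring
    · rw [add_x_ne h, add_x_ne h', ad_comm]

theorem zero_add' (p : ChG A) : 0 + p = p := by
  have h : ad (0 : ChG A).x p.x ≠ one := by rw [zero_x, zero_ad]; exact p.hx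
  apply ChG.ext
  · rw [add_n_ne h, zero_n, zero_add]
  · rw [add_x_ne h, zero_x, zero_ad]

open Classical in
theorem neg_add' (p : ChG A) : -p + p = 0 := by
  by_cases h : p.x = zero
  · have e : -p = ⟨-p.n, zero, WChain.nontriv⟩ := by
      show (dite _ _ _ : ChG A) = _
      rw [dif_pos h]
    have h' : ad (-p).x p.x ≠ one := by
      rw [e, h]
      simp only [zero_ad]
      exact WChain.nontriv
    apply ChG.ext
    · rw [add_n_ne h', e, zero_n]; simp
    · rw [add_x_ne h', e, h, zero_x]
      simp only [zero_ad]
  · have e1 : (-p).n = - p.n - 1 := by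
      show (dite _ _ _ : ChG A).n = _
      rw [dif_neg h]
    have e2 : (-p).x = neg p.x := by
      show (dite _ _ _ : ChG A).x = _
      rw [dif_neg h]
    have h' : ad (-p).x p.x = one := by
      rw [e2]; unfold ad; rw [WAlg.neg_neg, WAlg.imp_self]
    apply ChG.ext
    · rw [add_n_one h', e1, zero_n]; ring
    · rw [add_x_one h', e2, zero_x]; unfold ml; rw [WAlg.imp_self]; rfl

/-- The carry case of associativity with only one carry. -/
theorem assoc_aux (p q r : ChG A) (h1 : ad p.x q.x ≠ one) (h2 : ad q.x r.x = one) :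
    p + q + r = p + (q + r) := by
  have e := case3 (le_neg_of_ne h1) h2
  have h3 : ad (p + q).x r.x = one := by
    rw [add_x_ne h1, ad_assoc, h2]; exact imp_one _
  have h4 : ad p.x (q + r).x ≠ one := by
    rw [add_x_one h2, e, ← add_x_ne h1, ← add_x_one h3]; exact ChG.hx _
  apply ChG.ext
  · rw [add_n_one h3, add_n_ne h1, add_n_ne h4, add_n_one h2]; ring
  · rw [add_x_one h3, add_x_ne h1, add_x_ne h4, add_x_one h2, e]

theorem add_assoc' (p q r : ChG A) : p + q + r = p + (q + r) := by
  by_cases h1 : ad p.x q.x = one <;> by_cases h2 : ad q.x r.x = one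
  · have e := case5 h1 h2
    by_cases h3 : ad (p + q).x r.x = one
    · have h4 : ad p.x (q + r).x = one := by
        rw [add_x_one h2, ← e, ← add_x_one h1, h3]
      apply ChG.ext
      · rw [add_n_one h3, add_n_one h1, add_n_one h4, add_n_one h2]; ring
      · rw [add_x_one h3, add_x_one h1, add_x_one h4, add_x_one h2, ml_assoc]
    · have h4 : ad p.x (q + r).x ≠ one := by
        rw [add_x_one h2, ← e, ← add_x_one h1]; exact h3
      apply ChG.ext
      · rw [add_n_ne h3, add_n_one h1, add_n_ne h4, add_n_one h2]; ring
      · rw [add_x_ne h3, add_x_one h1, add_x_ne h4, add_x_one h2, e]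
  · have := assoc_aux r q p (by rwa [ad_comm]) (by rwa [ad_comm])
    rw [add_comm' (p + q), add_comm' p q, ← this, add_comm' r q, add_comm' _ p]
  · exact assoc_aux p q r h1 h2
  · have e := case2 (le_neg_of_ne h1) (le_neg_of_ne h2)
    by_cases h3 : ad (p + q).x r.x = one
    · have h4 : ad p.x (q + r).x = one := by
        rw [add_x_ne h2, ← ad_assoc, ← add_x_ne h1, h3]
      apply ChG.ext
      · rw [add_n_one h3, add_n_ne h1, add_n_one h4, add_n_ne h2]; ring
      · rw [add_x_one h3, add_x_ne h1, add_x_one h4, add_x_ne h2, e]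
    · have h4 : ad p.x (q + r).x ≠ one := by
        rw [add_x_ne h2, ← ad_assoc, ← add_x_ne h1]; exact h3
      apply ChG.ext
      · rw [add_n_ne h3, add_n_ne h1, add_n_ne h4, add_n_ne h2]; ring
      · rw [add_x_ne h3, add_x_ne h1, add_x_ne h4, add_x_ne h2, ad_assoc]

noncomputable instance : AddCommGroup (ChG A) where
  add_assoc := add_assoc'
  zero_add := zero_add'
  add_zero p := by rw [add_comm', zero_add']
  nsmul := nsmulRec
  zsmul := zsmulRec
  neg_add_cancel := neg_add'
  add_comm := add_comm'

open Classical in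
noncomputable instance : LinearOrder (ChG A) where
  le p q := p.n < q.n ∨ p.n = q.n ∧ imp p.x q.x = one
  le_refl p := Or.inr ⟨rfl, WAlg.imp_self _⟩
  le_trans p q r := by
    rintro (h | ⟨h, h'⟩) (k | ⟨k, k'⟩)
    · left; omega
    · left; omega
    · left; omega
    · exact Or.inr ⟨h.trans k, le_trans' h' k'⟩
  le_antisymm p q := by
    rintro (h | ⟨h, h'⟩) (k | ⟨k, k'⟩)
    · omega
    · omega
    · omega
    · exact ChG.ext h (antisymm _ _ h' k')
  le_total p q := by
    rcases lt_trichotomy p.n q.n with h | h | h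
    · exact Or.inl (Or.inl h)
    · rcases WChain.total p.x q.x with k | k
      · exact Or.inl (Or.inr ⟨h, k⟩)
      · exact Or.inr (Or.inr ⟨h.symm, k⟩)
    · exact Or.inr (Or.inl h)
  toDecidableLE := Classical.decRel _

theorem le_def (p q : ChG A) : p ≤ q ↔ p.n < q.n ∨ p.n = q.n ∧ imp p.x q.x = one := Iff.rfl

instance : IsOrderedAddMonoid (ChG A) where
  add_le_add_left p q h r := by
    rw [le_def] at h ⊢
    by_cases h1 : ad p.x r.x = one <;> by_cases h2 : ad q.x r.x = one
    · rw [add_n_one h1, add_n_one h2, add_x_one h1, add_x_one h2]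
      rcases h with h | ⟨h, h'⟩
      · left; omega
      · right; exact ⟨by omega, ml_mono _ h'⟩
    · rw [add_n_one h1, add_n_ne h2, add_x_one h1, add_x_ne h2]
      rcases h with h | ⟨h, h'⟩
      · have k : imp (ml p.x r.x) (ad q.x r.x) = one :=
          le_trans' (ml_le_right _ _) (le_ad_right _ _)
        by_cases h3 : p.n + 1 = q.n
        · right; exact ⟨by omega, k⟩
        · left; omega
      · exfalso; apply h2
        have := ad_mono r.x h'
        rw [h1] at this
        exact eq_one_of_one_le this
    · rw [add_n_ne h1, add_n_one h2]
      left; omega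
    · rw [add_n_ne h1, add_n_ne h2, add_x_ne h1, add_x_ne h2]
      rcases h with h | ⟨h, h'⟩
      · left; omega
      · right; exact ⟨by omega, ad_mono _ h'⟩

/-- The strong unit. -/
def u : ChG A := ⟨1, zero, WChain.nontriv⟩

open Classical in
/-- The embedding of the chain. -/
noncomputable def emb (a : A) : ChG A := if h : a = one then u else ⟨0, a, h⟩

theorem emb_one : emb (one : A) = u := by
  unfold emb; rw [dif_pos rfl]

theorem emb_ne {a : A} (h : a ≠ one) : emb a = ⟨0, a, h⟩ := by
  unfold emb; rw [dif_neg h]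

theorem emb_zero : emb (zero : A) = 0 := emb_ne WChain.nontriv

theorem emb_le {a b : A} : emb a ≤ emb b ↔ imp a b = one := by
  by_cases ha : a = one <;> by_cases hb : b = one
  · subst ha hb; simp only [le_refl, WAlg.imp_self]
  · subst ha
    rw [emb_one, emb_ne hb, le_def, one_imp]
    simp [u, hb]
  · subst hb
    rw [emb_one, emb_ne ha, le_def, imp_one]
    simp [u]
  · rw [emb_ne ha, emb_ne hb, le_def]; simp

theorem emb_imp {a b : A} (h : imp a b ≠ one) : emb (imp a b) = u - emb a + emb b := by
  have hb : b ≠ one := by rintro rfl; exact h (imp_one _)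
  have hba : imp b a = one := (WChain.total a b).resolve_left h
  suffices emb (imp a b) + emb a = u + emb b by
    rw [← sub_eq_zero] at this ⊢
    rw [← this]; abel
  by_cases ha : a = one
  · subst ha; rw [one_imp, emb_one, add_comm]
  · rw [emb_ne h, emb_ne ha, emb_ne hb]
    have h1 : ad (imp a b) a = one := by
      unfold ad
      rw [contra'', exch, contra'' a b, le_imp]
    have h2 : ad zero b ≠ one := by rwa [zero_ad]
    apply ChG.ext
    · rw [add_n_one h1, add_n_ne (by exact h2)]; simp [u]
    · rw [add_x_one h1, add_x_ne (by exact h2)]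
      simp only [u, zero_ad]
      unfold ml
      rw [← contra b a, WAlg.comm, contra, hba, one_imp, WAlg.neg_neg]

theorem emb_neg (a : A) : emb (neg a) = u - emb a := by
  by_cases h : imp a zero = one
  · have : a = zero := antisymm _ _ h (zero_imp _)
    subst this
    rw [neg_zero', emb_one, emb_zero, sub_zero]
  · have := emb_imp h
    rwa [imp_zero, emb_zero, add_zero] at this

end ChG

/-- Finitely many lexicographically positive elements are positive under a real homomorphism. -/
theorem lex_hom_exists {M K : Type*} [AddCommGroup M] [LinearOrder K] (co : K → M →+ ℝ)
    (C : Finset K) : ∀ P : Finset M,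
      (∀ x ∈ P, ∃ c ∈ C, 0 < co c x ∧ ∀ d < c, co d x = 0) →
      ∃ h : M →+ ℝ, ∀ x ∈ P, 0 < h x := by
  classical
  induction C using Finset.induction_on_min with
  | empty =>
    intro P hP
    exact ⟨0, fun x hx => by obtain ⟨c, hc, _⟩ := hP x hx; simp at hc⟩
  | insert c C hc ih =>
    intro P hP
    obtain ⟨h, hh⟩ := ih (P.filter fun x => ∃ c ∈ C, 0 < co c x ∧ ∀ d < c, co d x = 0) (by
      intro x hx
      exact (Finset.mem_filter.1 hx).2)
    obtain ⟨N, hN⟩ := (P.image fun x => |h x| / co c x + 1).exists_le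
    refine ⟨(AddMonoidHom.mulLeft N).comp (co c) + h, fun x hx => ?_⟩
    simp only [AddMonoidHom.add_apply, AddMonoidHom.comp_apply, AddMonoidHom.coe_mulLeft]
    obtain ⟨d, hd, hpos, hz⟩ := hP x hx
    rcases Finset.mem_insert.1 hd with rfl | hd
    · have h1 := hN _ (Finset.mem_image_of_mem _ hx)
      have h2 : |h x| / co d x < N := by linarith
      rw [div_lt_iff₀ hpos] at h2
      have := neg_abs_le (h x)
      linarith
    · rw [hz c (hc d hd)]
      have := hh x (Finset.mem_filter.2 ⟨hx, d, hd, hpos, hz⟩)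
      simpa using this

theorem ordered_hom_exists {G : Type} [AddCommGroup G] [LinearOrder G] [IsOrderedAddMonoid G]
    (P : Finset G) (hP : ∀ x ∈ P, 0 < x) : ∃ h : G →+ ℝ, ∀ x ∈ P, 0 < h x := by
  classical
  obtain ⟨f, hf, -⟩ := hahnEmbedding_isOrderedAddMonoid G
  have hpos : ∀ x ∈ P, ∃ c, 0 < (ofLex (f x)).coeff c ∧ ∀ d < c, (ofLex (f x)).coeff d = 0 := by
    intro x hx
    have h1 : 0 < f x := by
      refine lt_of_le_of_ne ?_ ?_
      · have := f.monotone' (hP x hx).le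
        simpa using this
      · intro h
        have : f x = f 0 := by rw [← h, map_zero]
        exact (hP x hx).ne' (hf this)
    obtain ⟨c, h2, h3⟩ := (HahnSeries.lt_iff _ _).1 h1
    exact ⟨c, by simpa using h3, fun d hd => by simpa using (h2 d hd).symm⟩
  choose c hc using hpos
  let co : FiniteArchimedeanClass G → G →+ ℝ := fun k =>
    { toFun := fun x => (ofLex (f x)).coeff k
      map_zero' := by simp
      map_add' := by intro x y; simp }
  exact lex_hom_exists co (P.attach.image fun x => c x.1 x.2) P fun x hx =>
    ⟨c x hx, Finset.mem_image.2 ⟨⟨x, hx⟩, Finset.mem_attach _ _, rfl⟩, hc x hx⟩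

theorem ordered_hom_strict {G : Type} [AddCommGroup G] [LinearOrder G] [IsOrderedAddMonoid G]
    {S : Set G} (hS : S.Finite) : ∃ h : G →+ ℝ, ∀ x ∈ S, ∀ y ∈ S, x < y → h x < h y := by
  classical
  obtain ⟨h, hh⟩ := ordered_hom_exists
    (((hS.toFinset ×ˢ hS.toFinset).image fun p => p.2 - p.1).filter fun x => 0 < x)
    (fun x hx => (Finset.mem_filter.1 hx).2)
  refine ⟨h, fun x hx y hy hxy => ?_⟩
  have := hh (y - x) (by
    simp only [Finset.mem_filter, Finset.mem_image, Finset.mem_product, Set.Finite.mem_toFinset]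
    exact ⟨⟨(x, y), ⟨hx, hy⟩, rfl⟩, sub_pos.2 hxy⟩)
  rw [map_sub] at this
  linarith

/-- Subformulas. -/
def LFml.sub : LFml → Set LFml
  | .var n => {.var n}
  | .neg a => insert (.neg a) a.sub
  | .imp a b => insert (.imp a b) (a.sub ∪ b.sub)

theorem LFml.sub_finite (a : LFml) : a.sub.Finite := by
  induction a with
  | var n => exact Set.finite_singleton _
  | neg a ih => exact ih.insert _
  | imp a b iha ihb => exact (iha.union ihb).insert _

theorem LFml.self_mem_sub (a : LFml) : a ∈ a.sub := by
  cases a <;> simp [LFml.sub]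

open WAlg ChG in
/-- Countermodels from linear theories. -/
theorem countermodel {T Γ : Set LFml} (hfin : Γ.Finite) {f : LFml} (hΓ : Γ ⊆ T)
    (hf : ¬ LukProv T f) (hlin : ∀ a b : LFml, LukProv T (a.imp b) ∨ LukProv T (b.imp a)) :
    ∃ v : ℕ → ℝ, (∀ n, v n ∈ Set.Icc (0 : ℝ) 1) ∧ (∀ g ∈ Γ, leval v g = 1) ∧ leval v f ≠ 1 := by
  have hf1 : Lind.mk T f ≠ one := fun h => hf (Lind.mk_eq_one.1 h)
  let _ : WChain (Lind T) :=
    { total := by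
        rintro ⟨x⟩ ⟨y⟩
        rcases hlin x y with h | h
        · exact Or.inl (Lind.mk_eq_one.2 h)
        · exact Or.inr (Lind.mk_eq_one.2 h)
      nontriv := by
        intro h
        apply hf1
        have h1 : imp (zero : Lind T) (Lind.mk T f) = one := zero_imp _
        unfold zero at h1
        rw [h] at h1
        exact eq_one_of_one_le h1 }
  let F : Set LFml := ⋃ g ∈ insert f Γ, g.sub
  have hF : F.Finite := (hfin.insert f).biUnion fun g _ => g.sub_finite
  let e : LFml → ChG (Lind T) := fun g => emb (Lind.mk T g)
  let S : Set (ChG (Lind T)) := insert 0 (insert u (e '' F))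
  have hS : S.Finite := ((hF.image e).insert u).insert 0
  obtain ⟨h, hh⟩ := ordered_hom_strict hS
  have hle : ∀ x ∈ S, ∀ y ∈ S, x ≤ y → h x ≤ h y := by
    intro x hx y hy hxy
    rcases hxy.lt_or_eq with k | k
    · exact (hh x hx y hy k).le
    · rw [k]
  have h0S : (0 : ChG (Lind T)) ∈ S := Or.inl rfl
  have huS : (u : ChG (Lind T)) ∈ S := Or.inr (Or.inl rfl)
  have heS : ∀ g ∈ F, e g ∈ S := fun g hg => Or.inr (Or.inr ⟨g, hg, rfl⟩)
  have e0 : ∀ g, 0 ≤ e g := fun g => by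
    rw [← emb_zero]; exact emb_le.2 (zero_imp _)
  have e1 : ∀ g, e g ≤ u := fun g => by
    rw [← emb_one]; exact emb_le.2 (imp_one _)
  have hu : 0 < h u := by
    have := hh 0 h0S u huS (by
      refine lt_of_le_of_ne ((e0 f).trans (e1 f)) ?_
      intro k
      have := congrArg ChG.n k
      simp [zero_n, u] at this)
    simpa using this
  let v : ℕ → ℝ := fun n => max 0 (min 1 (h (e (.var n)) / h u))
  have hv : ∀ g, g.sub ⊆ F → leval v g = h (e g) / h u := by
    intro g
    induction g with
    | var n =>
      intro hg
      have hm := heS _ (hg (LFml.self_mem_sub _))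
      have k0 := hle _ h0S _ hm (e0 _)
      have k1 := hle _ hm _ huS (e1 _)
      rw [map_zero] at k0
      simp only [leval, v]
      rw [min_eq_right ((div_le_one hu).2 k1), max_eq_right (div_nonneg k0 hu.le)]
    | neg a ih =>
      intro hg
      have ha : a.sub ⊆ F := (Set.subset_insert _ _).trans hg
      have : e a.neg = u - e a := emb_neg (Lind.mk T a)
      rw [leval, ih ha, this, map_sub]
      field_simp
    | imp a b iha ihb =>
      intro hg
      have hab : a.sub ∪ b.sub ⊆ F := (Set.subset_insert _ _).trans hg
      have ha := Set.subset_union_left.trans hab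
      have hb := Set.subset_union_right.trans hab
      have hma := heS _ (ha (LFml.self_mem_sub _))
      have hmb := heS _ (hb (LFml.self_mem_sub _))
      have hm := heS _ (hg (LFml.self_mem_sub _))
      rw [leval, iha ha, ihb hb]
      by_cases k : imp (Lind.mk T a) (Lind.mk T b) = one
      · have k1 := hle _ hma _ hmb (emb_le.2 k)
        have k2 : e (a.imp b) = u := by
          show emb (imp (Lind.mk T a) (Lind.mk T b)) = _
          rw [k, emb_one]
        have k3 := div_le_div_of_nonneg_right k1 hu.le
        rw [k2, div_self hu.ne', min_eq_left]
        linarith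
      · have k2 : e (a.imp b) = u - e a + e b := emb_imp k
        have k1 := hle _ hm _ huS (e1 _)
        rw [k2] at k1 ⊢
        rw [map_add, map_sub] at k1 ⊢
        have k3 : 1 - h (e a) / h u + h (e b) / h u = (h u - h (e a) + h (e b)) / h u := by
          field_simp
        rw [k3, min_eq_right]
        exact (div_le_one hu).2 k1
  have hsub : ∀ g ∈ insert f Γ, g.sub ⊆ F := fun g hg =>
    Set.subset_biUnion_of_mem (u := fun g : LFml => g.sub) hg
  refine ⟨v, fun n => ⟨le_max_left _ _, max_le zero_le_one (min_le_left _ _)⟩, ?_, ?_⟩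
  · intro g hg
    rw [hv g (hsub g (Or.inr hg))]
    have : e g = u := by
      show emb (Lind.mk T g) = _
      rw [Lind.mk_eq_one.2 (.hyp (hΓ hg))]
      exact emb_one
    rw [this, div_self hu.ne']
  · have hfF := hsub f (Or.inl rfl)
    rw [hv f hfF]
    have hm := heS _ (hfF (LFml.self_mem_sub _))
    have : e f < u := by
      rw [← emb_one, ← not_le]
      intro k
      exact hf1 (eq_one_of_one_le (emb_le.1 k))
    have k := hh _ hm _ huS this
    exact ((div_lt_one hu).2 k).ne

/-- finite strong standard completeness for Ł: if `Γ` is a finite set of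
formulas and `φ` a formula of the language of Ł, then `Γ ⊢_Ł φ` iff every assignment
into `[0,1]_Ł` that gives value `1` to all formulas of `Γ` gives value `1` to `φ`. -/
theorem luk_finite_strong_standard_completeness (Γ : Set LFml) (φ : LFml)
    (hfin : Γ.Finite) :
    LukProv Γ φ ↔
      ∀ v : ℕ → ℝ, (∀ n, v n ∈ Set.Icc (0 : ℝ) 1) →
        (∀ ψ ∈ Γ, leval v ψ = 1) → leval v φ = 1 := by
  constructor
  · intro h v hv hT
    exact h.sound v hv hT
  · intro H
    by_contra hn
    obtain ⟨T, hΓ, hT, hlin⟩ := LukProv.exists_linear hn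
    obtain ⟨v, hv, h1, h2⟩ := countermodel hfin hΓ hT hlin
    exact h2 (H v hv h1)
end
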